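/- Let D ⊆ ℝⁿ be a nonempty convex bounded closed set, let f : ℝⁿ → ℝ be convex, and let λ̄ ∈ (0,1). Let sequences x_i ∈ D, γ_i ∈ ℝ, β_i ∈ ℝ, λ_i ∈ (0, λ̄], and subgradients a_i of f at x_i satisfy: γ_i ≤ β_i for all i; the sequence (β_i) is nonincreasing and β_{i+1} ≤ f(x_i) for all i; and, setting l_i = (1 − λ_i)γ_i + λ_i β_i, the inequality f(x_{i'}) + ⟨a_{i'}, x_{i''} − x_{i'}⟩ ≤ l_{i''} holds for all i' < i''. Then β_i − γ_i → 0 as i → ∞. -/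

import Mathlib

open scoped InnerProductSpace

/-!
For `i < j` the linearization of `f` at `x i` has, at `x j`, a value at most the level `l_j`, which
lies at least `(1 - lamBar) * (β j - γ j)` below `β j ≤ f (x i)`. As its slope is `a i`, this drop
is at most `‖a i‖ * dist (x i) (x j)`. Subgradients of a continuous function at the points of a
compact set are uniformly bounded, and in a totally bounded set all late terms of a sequence are
close to some earlier term; hence the gap `β j - γ j` tends to `0`.
-/

section TotallyBounded

open Filter Topology

variable {X : Type*} [PseudoMetricSpace X] {s : Set X} {x : ℕ → X}

theorem eventually_exists_lt_dist_lt (hs : TotallyBounded s) (hx : ∀ i, x i ∈ s)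
    {δ : ℝ} (hδ : 0 < δ) : ∀ᶠ j in atTop, ∃ i < j, dist (x i) (x j) < δ := by
  obtain ⟨t, ht, hst⟩ := Metric.totallyBounded_iff.mp hs (δ / 2) (half_pos hδ)
  have exists_center (i : ℕ) : ∃ c ∈ t, dist (x i) c < δ / 2 := by
    simpa using hst (hx i)
  choose center center_mem dist_center using exists_center
  rw [← Nat.cofinite_eq_atTop, eventually_cofinite]
  by_contra hinf
  obtain ⟨i, -, j, hj, hij, same_center⟩ :=
    Set.Infinite.exists_lt_map_eq_of_mapsTo hinf (fun i _ ↦ center_mem i) ht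
  have dist_lt : dist (x i) (x j) < δ := by
    have := dist_triangle_right (x i) (x j) (center i)
    linarith [dist_center i, same_center ▸ dist_center j]
  exact hj ⟨i, hij, dist_lt⟩

theorem tendsto_zero_of_le_mul_dist (hs : TotallyBounded s) (hx : ∀ i, x i ∈ s)
    {u : ℕ → ℝ} (hu : ∀ j, 0 ≤ u j) {C : ℝ} (huC : ∀ i j, i < j → u j ≤ C * dist (x i) (x j)) :
    Tendsto u atTop (𝓝 0) := by
  refine tendsto_order.mpr ⟨fun b hb ↦ .of_forall fun j ↦ hb.trans_le (hu j), fun ε hε ↦ ?_⟩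
  have hC : 0 < |C| + 1 := by positivity
  filter_upwards [eventually_exists_lt_dist_lt hs hx (div_pos hε hC)] with j ⟨i, hij, hdist⟩
  calc u j ≤ C * dist (x i) (x j) := huC i j hij
    _ ≤ (|C| + 1) * dist (x i) (x j) := by gcongr; linarith [le_abs_self C]
    _ < ε := (lt_div_iff₀' hC).mp hdist

end TotallyBounded

section LevelMethod

open Filter Metric Topology

variable {E : Type*} [NormedAddCommGroup E] [NormedSpace ℝ E]

/-- The functional `a` is a subgradient of `f` at `y`. Subgradients are taken in the dual space, so
that the notion makes sense without an inner product. -/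
def IsSubgradientAt (f : E → ℝ) (a : StrongDual ℝ E) (y : E) : Prop :=
  ∀ w, a (w - y) ≤ f w - f y

variable {f : E → ℝ}

theorem IsSubgradientAt.norm_le_div {a : StrongDual ℝ E} {y : E} (ha : IsSubgradientAt f a y)
    {r C : ℝ} (hr : 0 < r) (hC : ∀ w ∈ closedBall y r, f w - f y ≤ C) : ‖a‖ ≤ C / r := by
  have apply_le (z : E) (hz : ‖z‖ ≤ r) : a z ≤ C := by
    simpa using (ha (y + z)).trans (hC (y + z) (by simpa using hz))
  refine a.opNorm_bound_of_ball_bound hr C fun z hz ↦ ?_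
  rw [mem_closedBall_zero_iff] at hz
  have neg_apply_le : -a z ≤ C := by
    simpa only [map_neg] using apply_le (-z) (by rwa [norm_neg])
  exact abs_le'.mpr ⟨apply_le z hz, neg_apply_le⟩

theorem exists_mem_nhds_isBounded_setOf_isSubgradientAt {p : E} (hf : ContinuousAt f p) :
    ∃ U ∈ 𝓝 p, Bornology.IsBounded {a | ∃ y ∈ U, IsSubgradientAt f a y} := by
  obtain ⟨r, hr, dist_lt⟩ := Metric.continuousAt_iff.mp hf 1 one_pos
  refine ⟨ball p (r / 2), ball_mem_nhds p (half_pos hr), ?_⟩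
  refine isBounded_iff_forall_norm_le.mpr ⟨2 / (r / 2), ?_⟩
  rintro a ⟨y, hy, ha⟩
  refine ha.norm_le_div (by positivity) fun w hw ↦ ?_
  rw [mem_ball] at hy
  rw [mem_closedBall] at hw
  have hfy := abs_lt.mp (dist_lt (x := y) (by linarith))
  have hfw := abs_lt.mp (dist_lt (x := w) (by linarith [dist_triangle w y p]))
  linarith [hfy.1, hfw.2]

theorem isBounded_setOf_isSubgradientAt {K : Set E} (hK : IsCompact K)
    (hf : ∀ p ∈ K, ContinuousAt f p) :
    Bornology.IsBounded {a | ∃ y ∈ K, IsSubgradientAt f a y} := by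
  refine hK.induction_on (p := fun S ↦ Bornology.IsBounded {a | ∃ y ∈ S, IsSubgradientAt f a y})
    (by simp) (fun S T hST hT ↦ ?mono) (fun S T hS hT ↦ ?union) (fun p hp ↦ ?nhds)
  case mono => exact hT.subset fun a ⟨y, hy, ha⟩ ↦ ⟨y, hST hy, ha⟩
  case union => simpa only [Set.mem_union, or_and_right, exists_or, Set.ofPred_or] using hS.union hT
  case nhds =>
    obtain ⟨U, hU, bounded⟩ := exists_mem_nhds_isBounded_setOf_isSubgradientAt (hf p hp)
    exact ⟨U, mem_nhdsWithin_of_mem_nhds hU, bounded⟩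

theorem one_sub_mul_gap_le_norm_mul_dist {a : StrongDual ℝ E} {y z : E} {v b g lam lamBar : ℝ}
    (hlam : lam ≤ lamBar) (hgb : g ≤ b) (hbv : b ≤ v)
    (hlevel : v + a (z - y) ≤ (1 - lam) * g + lam * b) :
    (1 - lamBar) * (b - g) ≤ ‖a‖ * dist y z :=
  calc (1 - lamBar) * (b - g) ≤ (1 - lam) * (b - g) := by gcongr
    _ = b - ((1 - lam) * g + lam * b) := by ring
    _ ≤ -a (z - y) := by linarith
    _ = a (y - z) := by rw [← map_neg, neg_sub]
    _ ≤ ‖a‖ * ‖y - z‖ := (le_abs_self _).trans (a.le_opNorm _)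
    _ = ‖a‖ * dist y z := by rw [dist_eq_norm]

theorem stmt_15_general {K : Set E} (hK : IsCompact K) (hf : ∀ p ∈ K, ContinuousAt f p)
    {lamBar : ℝ} (hlamBar : lamBar < 1) {x : ℕ → E} (hx : ∀ i, x i ∈ K)
    {γ β lam : ℕ → ℝ} (hlam : ∀ i, lam i ≤ lamBar)
    {a : ℕ → StrongDual ℝ E} (ha : ∀ i, IsSubgradientAt f (a i) (x i))
    (hγβ : ∀ i, γ i ≤ β i) (hβ : Antitone β) (hβf : ∀ i, β (i + 1) ≤ f (x i))
    (hlevel : ∀ i j, i < j → f (x i) + a i (x j - x i) ≤ (1 - lam j) * γ j + lam j * β j) :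
    Tendsto (fun i ↦ β i - γ i) atTop (𝓝 0) := by
  obtain ⟨C, hC⟩ := (isBounded_setOf_isSubgradientAt hK hf).exists_norm_le
  have gap_le (i j : ℕ) (hij : i < j) : β j - γ j ≤ C / (1 - lamBar) * dist (x i) (x j) := by
    have hβx : β j ≤ f (x i) := (hβ (Nat.succ_le_of_lt hij)).trans (hβf i)
    rw [div_mul_eq_mul_div, le_div_iff₀' (sub_pos.mpr hlamBar)]
    calc (1 - lamBar) * (β j - γ j) ≤ ‖a i‖ * dist (x i) (x j) :=
          one_sub_mul_gap_le_norm_mul_dist (hlam j) (hγβ j) hβx (hlevel i j hij)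
      _ ≤ C * dist (x i) (x j) := by gcongr; exact hC _ ⟨x i, hx i, ha i⟩
  exact tendsto_zero_of_le_mul_dist hK.totallyBounded hx (fun j ↦ sub_nonneg.mpr (hγβ j)) gap_le

end LevelMethod

/-- Lemma 2.3.7: in the level method, `β_i − γ_i → 0`. -/
theorem stmt_15 {n : ℕ}
    (D : Set (EuclideanSpace ℝ (Fin n))) (hDne : D.Nonempty)
    (hDconv : Convex ℝ D) (hDbd : Bornology.IsBounded D) (hDcl : IsClosed D)
    (f : EuclideanSpace ℝ (Fin n) → ℝ) (hf : ConvexOn ℝ Set.univ f)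
    (lamBar : ℝ) (hlb : lamBar ∈ Set.Ioo (0:ℝ) 1)
    (x : ℕ → EuclideanSpace ℝ (Fin n)) (hx : ∀ i, x i ∈ D)
    (γ β lam : ℕ → ℝ)
    (hlam : ∀ i, lam i ∈ Set.Ioc 0 lamBar)
    (a : ℕ → EuclideanSpace ℝ (Fin n))
    (ha : ∀ i, ∀ w : EuclideanSpace ℝ (Fin n), ⟪a i, w - x i⟫_ℝ ≤ f w - f (x i))
    (hγβ : ∀ i, γ i ≤ β i)
    (hβmono : Antitone β)
    (hβf : ∀ i, β (i + 1) ≤ f (x i))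
    (hlevel : ∀ i' i'' : ℕ, i' < i'' →
        f (x i') + ⟪a i', x i'' - x i'⟫_ℝ ≤
          (1 - lam i'') * γ i'' + lam i'' * β i'') :
    Filter.Tendsto (fun i => β i - γ i) Filter.atTop (nhds 0) := by
  have hcont : Continuous f := continuousOn_univ.mp (hf.continuousOn isOpen_univ)
  exact stmt_15_general (Metric.isCompact_of_isClosed_isBounded hDcl hDbd)
    (fun p _ ↦ hcont.continuousAt) hlb.2 hx (fun i ↦ (hlam i).2) (a := fun i ↦ innerSL ℝ (a i))
    ha hγβ hβmono hβf hlevel
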